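/- Let ε ≠ 0 be a real constant. Let u : ℝ² → ℝ be a C² solution of u_t = u_x·u_xx/(u_x + 1)³ + ε·u such that u_x(t, x) ≠ −1 for all (t, x) ∈ ℝ². Let v be a C² function on an open subset of ℝ² such that v(e^{εt}/ε, x + u(t, x)) = e^{−εt}·u(t, x) for all (t, x) ∈ ℝ². Then at every point (s, y) = (e^{εt}/ε, x + u(t, x)), the function v satisfies v_s(s, y) = v_y(s, y)·v_{yy}(s, y) − ε·v(s, y)·v_y(s, y). -/

import Mathlib

/-!
Along a solution put `E = e^{εt}`. Differentiating the relation `v(E/ε, x + u) = u/E` in `x`,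
then the resulting formula for `v_y` in `x`, and the relation itself in `t`, gives
`v_y (1 + u_x) = u_x / E`,
`v_yy (1 + u_x) = u_xx / (E (1 + u_x)²)` and
`E v_s + v_y u_t = u_t / E − ε u / E`.
Since `1 + u_x ≠ 0`, these determine `v_y`, `v_yy`, `v_s` in terms of the derivatives of `u`;
eliminating `u_t` with the equation for `u` leaves a rational identity. The chain rule is justified
because a `C²` function on an open set has the total derivative assembled from `pt` and `px`
(`hasFDerivAt_of_contDiffOn`), and its `px` is again differentiable in the space variable
(`hasDerivAt_px`).
-/

open Real

/-- Partial derivative with respect to the first (time) variable. -/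
noncomputable def pt (u : ℝ → ℝ → ℝ) (t x : ℝ) : ℝ := deriv (fun s => u s x) t

/-- Partial derivative with respect to the second (space) variable. -/
noncomputable def px (u : ℝ → ℝ → ℝ) (t x : ℝ) : ℝ := deriv (fun y => u t y) x

/-- Second partial derivative with respect to the second (space) variable. -/
noncomputable def pxx (u : ℝ → ℝ → ℝ) (t x : ℝ) : ℝ :=
  deriv (fun y => deriv (fun z => u t z) y) x

/-- The total derivative of a `C²` function on an open set is assembled from `pt` and `px`. -/
theorem hasFDerivAt_of_contDiffOn {w : ℝ → ℝ → ℝ} {Ω : Set (ℝ × ℝ)} (hΩ : IsOpen Ω)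
    (hw : ContDiffOn ℝ 2 (fun p : ℝ × ℝ => w p.1 p.2) Ω) {s y : ℝ} (h : (s, y) ∈ Ω) :
    HasFDerivAt (fun p : ℝ × ℝ => w p.1 p.2)
      (pt w s y • ContinuousLinearMap.fst ℝ ℝ ℝ + px w s y • ContinuousLinearMap.snd ℝ ℝ ℝ)
      (s, y) := by
  have hd : HasFDerivAt (fun p : ℝ × ℝ => w p.1 p.2) _ (s, y) :=
    ((hw.contDiffAt (hΩ.mem_nhds h)).differentiableAt (by norm_num)).hasFDerivAt
  have h1 : HasDerivAt (fun a => w a y) _ s :=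
    hd.comp_hasDerivAt (f := fun a : ℝ => (a, y)) s
      ((hasDerivAt_id s).prodMk (hasDerivAt_const s y))
  have h2 : HasDerivAt (fun a => w s a) _ y :=
    hd.comp_hasDerivAt (f := fun a : ℝ => (s, a)) y
      ((hasDerivAt_const y s).prodMk (hasDerivAt_id y))
  have e : pt w s y • ContinuousLinearMap.fst ℝ ℝ ℝ + px w s y • ContinuousLinearMap.snd ℝ ℝ ℝ
      = fderiv ℝ (fun p : ℝ × ℝ => w p.1 p.2) (s, y) := by
    ext <;> simp [pt, px, h1.deriv, h2.deriv]
  exact e ▸ hd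

/-- Chain rule along a curve, in terms of partial derivatives. -/
theorem hasDerivAt_comp_curve {w : ℝ → ℝ → ℝ} {Ω : Set (ℝ × ℝ)} (hΩ : IsOpen Ω)
    (hw : ContDiffOn ℝ 2 (fun p : ℝ × ℝ => w p.1 p.2) Ω) {f g : ℝ → ℝ} {f' g' r : ℝ}
    (h : (f r, g r) ∈ Ω) (hf : HasDerivAt f f' r) (hg : HasDerivAt g g' r) :
    HasDerivAt (fun a => w (f a) (g a))
      (pt w (f r) (g r) * f' + px w (f r) (g r) * g') r := by
  have := (hasFDerivAt_of_contDiffOn hΩ hw h).comp_hasDerivAt (f := fun a => (f a, g a)) r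
    (hf.prodMk hg)
  simpa [Function.comp_def] using this

/-- On an open set where `w` is `C²`, `px w` is differentiable in the space variable; near the
point, `px w` agrees with the total derivative of `w` evaluated at `(0, 1)`, which is `C¹`. -/
theorem hasDerivAt_px {w : ℝ → ℝ → ℝ} {Ω : Set (ℝ × ℝ)} (hΩ : IsOpen Ω)
    (hw : ContDiffOn ℝ 2 (fun p : ℝ × ℝ => w p.1 p.2) Ω) {s y : ℝ} (h : (s, y) ∈ Ω) :
    HasDerivAt (fun z => px w s z) (pxx w s y) y := by
  have hF : DifferentiableAt ℝ (fderiv ℝ (fun p : ℝ × ℝ => w p.1 p.2)) (s, y) :=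
    ((hw.contDiffAt (hΩ.mem_nhds h)).fderiv_right (m := 1) (by norm_num)).differentiableAt
      (by norm_num)
  have hc : DifferentiableAt ℝ (fun z : ℝ => (s, z)) y := by fun_prop
  have hG : DifferentiableAt ℝ
      (fun z => fderiv ℝ (fun p : ℝ × ℝ => w p.1 p.2) (s, z) (0, 1)) y :=
    (DifferentiableAt.comp (f := fun z : ℝ => (s, z)) y hF hc).clm_apply
      (differentiableAt_const _)
  have hev : (fun z => px w s z) =ᶠ[nhds y]
      fun z => fderiv ℝ (fun p : ℝ × ℝ => w p.1 p.2) (s, z) (0, 1) := by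
    filter_upwards [hc.continuousAt.preimage_mem_nhds (hΩ.mem_nhds h)] with z hz
    rw [(hasFDerivAt_of_contDiffOn hΩ hw hz).fderiv]
    simp
  exact (hG.congr_of_eventuallyEq hev).hasDerivAt

/-- The point transformation t̃ = ε⁻¹e^{εt}, x̃ = x + u, ũ = e^{−εt}u maps solutions
of `u_t = u_x u_xx/(u_x + 1)³ + εu` to solutions of `v_s = v_y v_yy − ε v v_y`. -/
theorem peculiar_case_transformation
    (ε : ℝ) (hε : ε ≠ 0)
    (u : ℝ → ℝ → ℝ)
    (hu : ContDiff ℝ 2 (fun p : ℝ × ℝ => u p.1 p.2))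
    (hux : ∀ t x : ℝ, px u t x ≠ -1)
    (hpde : ∀ t x : ℝ,
      pt u t x = px u t x * pxx u t x / (px u t x + 1) ^ 3 + ε * u t x)
    (Ω' : Set (ℝ × ℝ)) (hΩ' : IsOpen Ω')
    (v : ℝ → ℝ → ℝ)
    (hv : ContDiffOn ℝ 2 (fun p : ℝ × ℝ => v p.1 p.2) Ω')
    (hmem : ∀ t x : ℝ, (Real.exp (ε * t) / ε, x + u t x) ∈ Ω')
    (hrel : ∀ t x : ℝ,
      v (Real.exp (ε * t) / ε) (x + u t x) = Real.exp (-(ε * t)) * u t x) :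
    ∀ t x : ℝ,
      pt v (Real.exp (ε * t) / ε) (x + u t x) =
        px v (Real.exp (ε * t) / ε) (x + u t x) *
            pxx v (Real.exp (ε * t) / ε) (x + u t x)
          - ε * v (Real.exp (ε * t) / ε) (x + u t x) *
              px v (Real.exp (ε * t) / ε) (x + u t x) := by
  intro t x
  have hu' := hu.contDiffOn (s := Set.univ)
  have hxu : ∀ x, HasDerivAt (fun z => u t z) (px u t x) x := fun x => by
    simpa using hasDerivAt_comp_curve isOpen_univ hu' (Set.mem_univ _)
      (hasDerivAt_const x t) (hasDerivAt_id x)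
  have htu : HasDerivAt (fun a => u a x) (pt u t x) t := by
    simpa using hasDerivAt_comp_curve isOpen_univ hu' (Set.mem_univ _)
      (hasDerivAt_id t) (hasDerivAt_const t x)
  have hne : ∀ x, 1 + px u t x ≠ 0 := fun x h => hux t x (by linarith)
  have hX : ∀ x, HasDerivAt (fun z => z + u t z) (1 + px u t x) x := fun x =>
    (hasDerivAt_id x).add (hxu x)
  have hvy : ∀ x, px v (exp (ε * t) / ε) (x + u t x)
      = exp (-(ε * t)) * (px u t x / (1 + px u t x)) := fun x => by
    have h1 := hasDerivAt_comp_curve hΩ' hv (hmem t x)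
      (hasDerivAt_const x (exp (ε * t) / ε)) (hX x)
    simp only [hrel] at h1
    have h2 := h1.unique ((hxu x).const_mul (exp (-(ε * t))))
    have := hne x
    field_simp
    linarith
  have hvyy : pxx v (exp (ε * t) / ε) (x + u t x) * (1 + px u t x)
      = exp (-(ε * t)) * (pxx u t x / (1 + px u t x) ^ 2) := by
    have h1 := HasDerivAt.comp x (hasDerivAt_px hΩ' hv (hmem t x)) (hX x)
    simp only [Function.comp_def, hvy] at h1
    have h3 := hasDerivAt_px isOpen_univ hu' (Set.mem_univ (t, x))
    have h2 := h1.unique ((h3.div (h3.const_add 1) (hne x)).const_mul (exp (-(ε * t))))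
    rw [h2]
    ring
  have hvs : pt v (exp (ε * t) / ε) (x + u t x) * exp (ε * t)
      + px v (exp (ε * t) / ε) (x + u t x) * pt u t x
      = exp (-(ε * t)) * (pt u t x - ε * u t x) := by
    have hε' : HasDerivAt (fun a => ε * a) ε t := by
      simpa using (hasDerivAt_id t).const_mul ε
    have hs : HasDerivAt (fun a => exp (ε * a) / ε) (exp (ε * t)) t := by
      simpa [hε] using hε'.exp.div_const ε
    have h1 := hasDerivAt_comp_curve hΩ' hv (hmem t x) hs (htu.const_add x)
    simp only [hrel] at h1
    rw [h1.unique (hε'.neg.exp.mul htu)]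
    simp only [Pi.neg_apply]
    ring
  have hE := exp_pos (ε * t)
  have hp := hpde t x
  have hn := hne x
  rw [add_comm (px u t x) 1] at hp
  rw [hrel]
  have hyy := eq_div_of_mul_eq hn hvyy
  rw [hvy x, hp] at hvs
  have hss := eq_div_of_mul_eq hE.ne' (eq_sub_of_add_eq hvs)
  rw [hyy, hvy x, hss, Real.exp_neg]
  field_simp
  ring
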